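/- For any two complex n×n positive semidefinite matrices A and B and any integer p with 0 ≤ p ≤ 7, all coefficients of the polynomial Tr[(A + tB)^p] in t are nonnegative. -/

import Mathlib

open Matrix ComplexOrder

namespace BMV

/-- Sum of all words with `a` letters `A` and `b` letters `B`. -/
def W {R : Type*} [Ring R] (A B : R) : ℕ → ℕ → R
  | 0, 0 => 1
  | a + 1, 0 => A * W A B a 0
  | 0, b + 1 => B * W A B 0 b
  | a + 1, b + 1 => A * W A B a (b + 1) + B * W A B (a + 1) b

/-- Representatives of the cyclic classes of words with four `A` and three `B`. -/
def N7 {R : Type*} [Ring R] (A B : R) : R :=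
  (A * (A * (A * (A * (B * (B * B))))))
    + (A * (A * (A * (B * (A * (B * B))))))
    + (A * (A * (A * (B * (B * (A * B))))))
    + (A * (A * (B * (A * (A * (B * B))))))
    + (A * (A * (B * (A * (B * (A * B))))))

/-- Half of the sum of all words with three `A` and three `B`, up to cyclic equivalence. -/
def N6 {R : Type*} [Ring R] (A B : R) : R :=
  3 * (A * (A * (A * (B * (B * B)))))
    + 3 * (A * (A * (B * (A * (B * B)))))
    + 3 * (A * (A * (B * (B * (A * B)))))
    + (A * (B * (A * (B * (A * B)))))

lemma W_swap {R : Type*} [Ring R] (A B : R) : ∀ a b, W A B a b = W B A b a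
  | 0, 0 => by simp [W]
  | a + 1, 0 => by simp only [W]; rw [W_swap A B a 0]
  | 0, b + 1 => by simp only [W]; rw [W_swap A B 0 b]
  | a + 1, b + 1 => by
      simp only [W]; rw [W_swap A B a (b + 1), W_swap A B (a + 1) b, add_comm]

lemma W_zero {R : Type*} [Ring R] (A B : R) (a : ℕ) : W A B a 0 = A ^ a := by
  induction a with
  | zero => simp [W]
  | succ a ih => simp only [W]; rw [ih, pow_succ']

section tracial
variable {R S : Type*} [Ring R] [CommRing S] (τ : R →+ S)

lemma rot7 (hτ : ∀ x y, τ (x * y) = τ (y * x)) (a b c d e f g : R) :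
    τ (a * (b * (c * (d * (e * (f * g)))))) = τ (b * (c * (d * (e * (f * (g * a)))))) := by
  rw [hτ a]; simp only [mul_assoc]

lemma rot6 (hτ : ∀ x y, τ (x * y) = τ (y * x)) (a b c d e f : R) :
    τ (a * (b * (c * (d * (e * f))))) = τ (b * (c * (d * (e * (f * a))))) := by
  rw [hτ a]; simp only [mul_assoc]

lemma tr_W43 (hτ : ∀ x y, τ (x * y) = τ (y * x)) (A B : R) :
    τ (W A B 4 3) = 7 * τ (N7 A B) := by
  have r := rot7 τ hτ
  simp only [W, N7, mul_add, mul_one, map_add]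
  linear_combination (1) * r A A A B B B A
    + (2) * r A A B B B A A
    + (3) * r A B B B A A A
    + (4) * r B B B A A A A
    + (5) * r B B A A A A B
    + (6) * r B A A A A B B
    + (1) * r A A B A B B A
    + (2) * r A B A B B A A
    + (3) * r B A B B A A A
    + (4) * r A B B A A A B
    + (5) * r B B A A A B A
    + (6) * r B A A A B A B
    + (3) * r A A B B A A B
    + (4) * r A B B A A B A
    + (5) * r B B A A B A A
    + (6) * r B A A B A A B
    + (1) * r A A B B A B A
    + (2) * r A B B A B A A
    + (3) * r B B A B A A A
    + (4) * r B A B A A A B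
    + (5) * r A B A A A B B
    + (6) * r B A A A B B A
    + (5) * r A B A A B A B
    + (6) * r B A A B A B A
    + (1) * r A B A A B B A
    + (2) * r B A A B B A A
    + (3) * r A B A B A A B
    + (4) * r B A B A A B A
    + (1) * r A B A B A B A
    + (2) * r B A B A B A A

lemma tr_W33 (hτ : ∀ x y, τ (x * y) = τ (y * x)) (A B : R) :
    τ (W A B 3 3) = 2 * τ (N6 A B) := by
  have r := rot6 τ hτ
  have h3 : ∀ x : R, τ (3 * x) = 3 * τ x := fun x => by
    rw [show (3 : R) * x = x + x + x by noncomm_ring]; simp only [map_add]; ring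
  simp only [W, N6, mul_add, mul_one, map_add, h3]
  linear_combination (1) * r A A B B B A
    + (2) * r A B B B A A
    + (3) * r B B B A A A
    + (4) * r B B A A A B
    + (5) * r B A A A B B
    + (4) * r A B A A B B
    + (5) * r B A A B B A
    + (1) * r A B A B B A
    + (2) * r B A B B A A
    + (3) * r A B B A A B
    + (4) * r B B A A B A
    + (5) * r B A A B A B
    + (1) * r A B B A B A
    + (2) * r B B A B A A
    + (3) * r B A B A A B
    + (1) * r B A B A B A

end tracial

lemma hasDerivAt_N6 {R : Type*} [NormedRing R] [NormedAlgebra ℝ R] (τ : R →L[ℝ] ℝ)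
    (hτ : ∀ x y, τ (x * y) = τ (y * x)) (P Q : ℝ → R) (s : ℝ)
    (hP : HasDerivAt P (-(P s * P s)) s) (hQ : HasDerivAt Q (-(P s * Q s)) s) :
    HasDerivAt (fun s => τ (N6 (P s) (Q s))) (-12 * τ (N7 (P s) (Q s))) s := by
  have r := rot7 (τ : R →+ ℝ) hτ
  simp only [AddMonoidHom.coe_coe] at r
  have h3 : ∀ x : R, τ (3 * x) = 3 * τ x := fun x => by
    rw [show (3 : R) * x = x + x + x by noncomm_ring]; simp only [map_add]; ring
  have key := τ.hasFDerivAt.comp_hasDerivAt s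
    ((((hP.mul (hP.mul (hP.mul (hQ.mul (hQ.mul hQ))))).const_mul (3 : R)).add
      ((hP.mul (hP.mul (hQ.mul (hP.mul (hQ.mul hQ))))).const_mul (3 : R))).add
      ((hP.mul (hP.mul (hQ.mul (hQ.mul (hP.mul hQ))))).const_mul (3 : R)) |>.add
      (hP.mul (hQ.mul (hP.mul (hQ.mul (hP.mul hQ))))))
  refine HasDerivAt.congr_deriv key ?_
  clear key
  simp only [N7, Pi.mul_apply, mul_add, neg_mul, neg_mul, mul_neg, map_add, map_neg, h3, mul_assoc]
  linear_combination (-6) * r (P s) (P s) (Q s) (Q s) (P s) (P s) (Q s)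
    + (-6) * r (P s) (Q s) (Q s) (P s) (P s) (Q s) (P s)
    + (-6) * r (Q s) (Q s) (P s) (P s) (Q s) (P s) (P s)
    + (-6) * r (Q s) (P s) (P s) (Q s) (P s) (P s) (Q s)
    + (-4) * r (P s) (Q s) (P s) (P s) (Q s) (P s) (Q s)
    + (-4) * r (Q s) (P s) (P s) (Q s) (P s) (Q s) (P s)
    + (-2) * r (P s) (Q s) (P s) (Q s) (P s) (P s) (Q s)
    + (-2) * r (Q s) (P s) (Q s) (P s) (P s) (Q s) (P s)

open Filter Topology in
/-- The flow argument: positivity for `N7` along the flow implies positivity for `N6`. -/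
lemma flow {R : Type*} [NormedRing R] [NormedAlgebra ℝ R] [CompleteSpace R] (τ : R →L[ℝ] ℝ)
    (hτ : ∀ x y, τ (x * y) = τ (y * x)) (A B : R) (hA : IsUnit A)
    (hu : ∀ s : ℝ, 0 ≤ s → IsUnit (1 + s • A))
    (hpos : ∀ s : ℝ, 0 ≤ s →
      0 ≤ τ (N7 (Ring.inverse (1 + s • A) * A) (Ring.inverse (1 + s • A) * B))) :
    0 ≤ τ (N6 A B) := by
  set D : ℝ → R := fun s => Ring.inverse (1 + s • A) with hD
  have hd : ∀ s, 0 ≤ s → HasDerivAt D (-(D s * A * D s)) s := by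
    intro s hs
    obtain ⟨u, hu'⟩ := hu s hs
    have h1 : HasDerivAt (fun s : ℝ => 1 + s • A) A s := by
      simpa using ((hasDerivAt_id s).smul_const A).const_add (1 : R)
    have h2 := hasFDerivAt_ringInverse (𝕜 := ℝ) u
    rw [hu'] at h2
    have h3 := h2.comp_hasDerivAt s h1
    refine h3.congr_deriv ?_
    simp [hD, ← hu', mul_assoc]
  have hφ : ∀ s, 0 ≤ s → HasDerivAt (fun s => τ (N6 (D s * A) (D s * B)))
      (-12 * τ (N7 (D s * A) (D s * B))) s := by
    intro s hs
    refine hasDerivAt_N6 τ hτ (fun s => D s * A) (fun s => D s * B) s ?_ ?_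
    · refine ((hd s hs).mul_const A).congr_deriv ?_
      simp [mul_assoc]
    · refine ((hd s hs).mul_const B).congr_deriv ?_
      simp [mul_assoc]
  have hanti : AntitoneOn (fun s => τ (N6 (D s * A) (D s * B))) (Set.Ici 0) := by
    apply antitoneOn_of_deriv_nonpos (convex_Ici 0)
    · exact fun s hs => (hφ s hs).continuousAt.continuousWithinAt
    · intro s hs
      rw [interior_Ici] at hs
      exact (hφ s (le_of_lt hs)).differentiableAt.differentiableWithinAt
    · intro s hs
      rw [interior_Ici] at hs
      rw [(hφ s (le_of_lt hs)).deriv]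
      have := hpos s (le_of_lt hs)
      linarith
  have hlimD : Tendsto D atTop (𝓝 0) := by
    obtain ⟨u, hu'⟩ := hA
    have h1 : Tendsto (fun s : ℝ => s⁻¹ • (1 : R) + A) atTop (𝓝 A) := by
      simpa using ((tendsto_inv_atTop_zero (𝕜 := ℝ)).smul_const (1 : R)).add_const A
    have h2 : ContinuousAt Ring.inverse A := hu' ▸ NormedRing.inverse_continuousAt u
    have h3 := tendsto_inv_atTop_zero (𝕜 := ℝ) |>.smul (h2.tendsto.comp h1)
    rw [zero_smul] at h3
    refine h3.congr' ?_
    filter_upwards [eventually_gt_atTop 0] with s hs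
    obtain ⟨v, hv⟩ := hu s hs.le
    have e : 1 + s • A = s • (s⁻¹ • (1 : R) + A) := by
      rw [smul_add, smul_smul, mul_inv_cancel₀ hs.ne', one_smul]
    have e2 : s⁻¹ • (1 : R) + A = s⁻¹ • (v : R) := by
      rw [hv, e, smul_smul, inv_mul_cancel₀ hs.ne', one_smul]
    have e3 : Ring.inverse (s⁻¹ • (v : R)) = s • ((v⁻¹ : Rˣ) : R) := by
      let w : Rˣ := ⟨s⁻¹ • (v : R), s • ((v⁻¹ : Rˣ) : R), by simp [smul_smul, hs.ne'],
        by simp [smul_smul, hs.ne']⟩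
      exact Ring.inverse_unit w
    simp only [Function.comp, hD]
    rw [e2, e3, smul_smul, inv_mul_cancel₀ hs.ne', one_smul, ← hv, Ring.inverse_unit]
  have hlim : Tendsto (fun s => τ (N6 (D s * A) (D s * B))) atTop (𝓝 0) := by
    have hc : Continuous (fun d : R => τ (N6 (d * A) (d * B))) := by
      unfold N6; fun_prop
    have := (hc.tendsto 0).comp hlimD
    simp only [N6, zero_mul, mul_zero, add_zero, map_zero] at this
    exact this
  have h0 : D 0 = 1 := by simp [hD]
  have := le_of_tendsto hlim (b := τ (N6 A B)) (by
    filter_upwards [eventually_ge_atTop 0] with s hs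
    have := hanti (Set.mem_Ici.2 le_rfl) (Set.mem_Ici.2 hs) hs
    simpa [h0] using this)
  exact this

section mat
variable {n : ℕ}

abbrev M (n : ℕ) := Matrix (Fin n) (Fin n) ℂ

lemma tr_mul_nonneg {P Q : M n} (hP : P.PosSemidef) (hQ : Q.PosSemidef) :
    0 ≤ (P * Q).trace := by
  obtain ⟨C, rfl⟩ : ∃ C : M n, P = Cᴴ * C := by
    open scoped MatrixOrder in
    exact CStarAlgebra.nonneg_iff_eq_star_mul_self.mp hP.nonneg
  rw [mul_assoc, trace_mul_comm]
  exact (hQ.mul_mul_conjTranspose_same C).trace_nonneg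

lemma tr_N7 {A B D : M n} (hA : A.PosSemidef) (hB : B.PosSemidef) (hD : D.PosSemidef) :
    0 ≤ (N7 (D * A) (D * B)).trace := by
  have a := hA.1.eq
  have b := hB.1.eq
  have d := hD.1.eq
  have hX : (D * B * D).PosSemidef := by
    have := hB.mul_mul_conjTranspose_same D
    rwa [d] at this
  have h1 := tr_mul_nonneg (hX.mul_mul_conjTranspose_same (A * D * B * D * A + A * D * A * D * B)) hD
  have h2 := tr_mul_nonneg (hX.mul_mul_conjTranspose_same (B * D * A * D * A)) hD
  refine (add_nonneg h1 h2).trans_eq ?_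
  have r := rot7 (traceAddMonoidHom (Fin n) ℂ) trace_mul_comm
  have r1 : ∀ x y : M n, (x * y).trace = (y * x).trace := trace_mul_comm
  simp only [traceAddMonoidHom_apply] at r
  simp only [conjTranspose_add, conjTranspose_mul, a, b, d, N7, mul_add, add_mul, trace_add]
  have e1 := r1 (A * D * B * D * A * (D * B * D) * (A * (D * (B * (D * A)))) ) D
  have e2 := r1 (A * D * B * D * A * (D * B * D) * (B * (D * (A * (D * A)))) ) D
  have e3 := r1 (A * D * A * D * B * (D * B * D) * (A * (D * (B * (D * A)))) ) D
  have e4 := r1 (A * D * A * D * B * (D * B * D) * (B * (D * (A * (D * A)))) ) D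
  have e5 := r1 (B * D * A * D * A * (D * B * D) * (A * (D * (A * (D * B)))) ) D
  rw [e1, e2, e3, e4, e5]
  have q : ∀ a b c d e f g : M n,
      (D * (a * (D * (b * (D * (c * (D * (d * (D * (e * (D * (f * (D * g))))))))))))).trace
      = (D * (b * (D * (c * (D * (d * (D * (e * (D * (f * (D * (g * (D * a))))))))))))).trace := by
    intro a b c d e f g
    simpa only [mul_assoc] using r (D * a) (D * b) (D * c) (D * d) (D * e) (D * f) (D * g)
  simp only [mul_assoc]
  linear_combination (1) * q A B A B A B A
    + (1) * q B A B A B A A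
    + (1) * q A B A B A A B
    + (1) * q B A B A A B A
    + (1) * q A B A A B A B
    + (1) * q B A A B A B A
    + (1) * q A B A B B A A
    + (1) * q B A B B A A A
    + (1) * q A B B A A A B
    + (1) * q B B A A A B A
    + (1) * q B A A A B A B
    + (1) * q A A B B A B A
    + (1) * q A B B A B A A
    + (1) * q B B A B A A A
    + (1) * q B A B A A A B
    + (1) * q A B A A A B B
    + (1) * q B A A A B B A
    + (1) * q A A B B B A A
    + (1) * q A B B B A A A
    + (1) * q B B B A A A A
    + (1) * q B B A A A A B
    + (1) * q B A A A A B B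
    + (1) * q B A A B A A B

lemma tr_N6_im {A B : M n} (hA : A.PosSemidef) (hB : B.PosSemidef) :
    ((N6 A B).trace).im = 0 := by
  rw [← Complex.conj_eq_iff_im]
  have r := rot6 (traceAddMonoidHom (Fin n) ℂ) trace_mul_comm
  simp only [traceAddMonoidHom_apply] at r
  have h3 : ∀ x : M n, (3 * x).trace = 3 * x.trace := fun x => by
    rw [show (3 : M n) * x = x + x + x by noncomm_ring]; simp only [trace_add]; ring
  have h3' : (starRingEnd ℂ) 3 = 3 := Complex.conj_ofNat 3
  simp only [N6, trace_add, h3, map_add, map_mul, h3']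
  simp only [starRingEnd_apply, ← trace_conjTranspose, conjTranspose_mul, hA.1.eq, hB.1.eq,
    mul_assoc]
  linear_combination (3) * r B B B A A A
    + (3) * r B B A A A B
    + (3) * r B A A A B B
    + (3) * r B B A B A A
    + (3) * r B A B A A B
    + (3) * r A B A A B B
    + (3) * r B A A B B A
    + (3) * r B A B B A A
    + (3) * r A B B A A B
    + (3) * r B B A A B A
    + (3) * r B A A B A B
    + (1) * r B A B A B A

open scoped Matrix.Norms.Operator in
lemma tr_N6_re {A B : M n} (hA : A.PosDef) (hB : B.PosSemidef) :
    0 ≤ ((N6 A B).trace).re := by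
  have : CompleteSpace (M n) := FiniteDimensional.complete ℝ (M n)
  let τ : M n →L[ℝ] ℝ := LinearMap.toContinuousLinearMap
    (Complex.reLm.comp (traceLinearMap (Fin n) ℝ ℂ))
  have hs : ∀ s : ℝ, 0 ≤ s → (1 + s • A).PosDef := fun s hs => by
    refine PosDef.one.add_posSemidef ?_
    exact hA.posSemidef.smul hs
  have := flow τ (fun x y => congrArg Complex.re (trace_mul_comm x y)) A B hA.isUnit
    (fun s h => (hs s h).isUnit) (fun s h => by
      change 0 ≤ ((N7 (Ring.inverse (1 + s • A) * A) (Ring.inverse (1 + s • A) * B)).trace).re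
      rw [← nonsing_inv_eq_ringInverse]
      exact (Complex.nonneg_iff.1 (tr_N7 hA.posSemidef hB (hs s h).inv.posSemidef)).1)
  exact this

open scoped Matrix.Norms.Operator in
open Filter Topology in
lemma tr_N6 {A B : M n} (hA : A.PosSemidef) (hB : B.PosSemidef) :
    0 ≤ (N6 A B).trace := by
  rw [Complex.nonneg_iff]
  refine ⟨?_, (tr_N6_im hA hB).symm⟩
  have hc : Continuous (fun d : ℝ => ((N6 (A + d • (1 : M n)) B).trace).re) := by
    unfold N6
    refine Complex.continuous_re.comp (Continuous.matrix_trace ?_)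
    fun_prop
  have ht := (hc.tendsto 0).mono_left (nhdsWithin_le_nhds (s := Set.Ioi 0))
  simp only [zero_smul, add_zero] at ht
  refine ge_of_tendsto ht ?_
  filter_upwards [self_mem_nhdsWithin] with d hd
  exact tr_N6_re (PosDef.posSemidef_add hA (PosDef.one.smul hd)) hB

lemma tr_W1 {A B : M n} (hA : A.PosSemidef) (hB : B.PosSemidef) (a : ℕ) :
    ∀ i, 0 ≤ (A ^ i * W A B a 1).trace := by
  induction a with
  | zero => intro i; simpa [W] using tr_mul_nonneg (hA.pow i) hB
  | succ a ih =>
    intro i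
    simp only [W, W_zero, mul_add, trace_add]
    refine add_nonneg ?_ ?_
    · rw [← mul_assoc, ← pow_succ]; exact ih _
    · rw [← mul_assoc, trace_mul_comm, ← mul_assoc, ← pow_add]
      exact tr_mul_nonneg (hA.pow _) hB

lemma tr_two {A B : M n} (hA : A.PosSemidef) (hB : B.PosSemidef) (i j k : ℕ) :
    0 ≤ (A ^ i * B * A ^ j * (B * A ^ k)).trace := by
  have h : (B * A ^ j * B).PosSemidef := by
    have := (hA.pow j).mul_mul_conjTranspose_same B
    rwa [hB.1.eq] at this
  have := tr_mul_nonneg (hA.pow (k + i)) h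
  rw [pow_add, mul_assoc, trace_mul_comm] at this
  simpa only [mul_assoc] using this

lemma tr_W1' {A B : M n} (hA : A.PosSemidef) (hB : B.PosSemidef) (i a : ℕ) :
    ∀ j, 0 ≤ (A ^ i * B * A ^ j * W A B a 1).trace := by
  induction a with
  | zero => intro j; simpa [W] using tr_two hA hB i j 0
  | succ a ih =>
    intro j
    simp only [W, W_zero, mul_add, trace_add]
    refine add_nonneg ?_ ?_
    · rw [← mul_assoc, mul_assoc (A ^ i * B), ← pow_succ]; exact ih _
    · exact tr_two hA hB i j (a + 1)

lemma tr_W2 {A B : M n} (hA : A.PosSemidef) (hB : B.PosSemidef) (a : ℕ) :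
    ∀ i, 0 ≤ (A ^ i * W A B a 2).trace := by
  induction a with
  | zero =>
    intro i
    have := tr_two hA hB i 0 0
    simpa [W, mul_assoc] using this
  | succ a ih =>
    intro i
    simp only [W, mul_add, trace_add]
    refine add_nonneg ?_ ?_
    · rw [← mul_assoc, ← pow_succ]; exact ih _
    · have := tr_W1' hA hB i (a + 1) 0
      simpa [W, mul_assoc, mul_add] using this

lemma tr_W_le {A B : M n} (hA : A.PosSemidef) (hB : B.PosSemidef) (a b : ℕ) (hab : b ≤ a)
    (h7 : a + b ≤ 7) : 0 ≤ (W A B a b).trace := by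
  have hb : b ≤ 3 := by omega
  interval_cases b
  · rw [W_zero]; exact (hA.pow a).trace_nonneg
  · simpa using tr_W1 hA hB a 0
  · simpa using tr_W2 hA hB a 0
  · have h4 : a ≤ 4 := by omega
    interval_cases a
    · have := tr_W33 (traceAddMonoidHom (Fin n) ℂ) trace_mul_comm A B
      simp only [traceAddMonoidHom_apply] at this
      rw [this]
      exact mul_nonneg (by norm_num) (tr_N6 hA hB)
    · have := tr_W43 (traceAddMonoidHom (Fin n) ℂ) trace_mul_comm A B
      simp only [traceAddMonoidHom_apply] at this
      rw [this]
      have h := tr_N7 hA hB (PosSemidef.one (n := Fin n) (R := ℂ))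
      rw [one_mul, one_mul] at h
      exact mul_nonneg (by norm_num) h

lemma tr_W {A B : M n} (hA : A.PosSemidef) (hB : B.PosSemidef) (a b : ℕ)
    (h7 : a + b ≤ 7) : 0 ≤ (W A B a b).trace := by
  rcases le_total b a with h | h
  · exact tr_W_le hA hB a b h h7
  · rw [W_swap]; exact tr_W_le hB hA b a h (by omega)

/-- The matrix of coefficients of the `p`-th power. -/
lemma coeff_pow (A B : M n) (p : ℕ) : ∀ r (i j : Fin n),
    (((A.map Polynomial.C + (Polynomial.X : Polynomial ℂ) • B.map Polynomial.C) ^ p) i j).coeff r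
      = if r ≤ p then W A B (p - r) r i j else 0 := by
  induction p with
  | zero =>
    intro r i j
    rcases r with _ | r
    · by_cases h : i = j <;> simp [W, Matrix.one_apply, h]
    · by_cases h : i = j <;> simp [Matrix.one_apply, h, Polynomial.coeff_one]
  | succ p ih =>
    intro r i j
    rw [pow_succ', Matrix.mul_apply, Polynomial.finsetSum_coeff]
    rcases r with _ | r
    · simp [add_mul, mul_assoc, Polynomial.coeff_C_mul, Polynomial.coeff_X_mul_zero, ih, W,
        Matrix.mul_apply]
    · simp only [Matrix.add_apply, Matrix.smul_apply, Matrix.map_apply, smul_eq_mul, add_mul,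
        mul_assoc, Polynomial.coeff_add, Polynomial.coeff_C_mul, Polynomial.coeff_X_mul, ih,
        Finset.sum_add_distrib]
      rcases lt_trichotomy r p with h | h | h
      · obtain ⟨q, rfl⟩ : ∃ q, p = r + 1 + q := ⟨p - (r + 1), by omega⟩
        have e1 : r + 1 + q - (r + 1) = q := by omega
        have e2 : r + 1 + q - r = q + 1 := by omega
        have e3 : r + 1 + q + 1 - (r + 1) = q + 1 := by omega
        have l1 : r + 1 ≤ r + 1 + q := by omega
        have l2 : r ≤ r + 1 + q := by omega
        have l3 : r + 1 ≤ r + 1 + q + 1 := by omega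
        simp only [e1, e2, e3, l1, l2, l3, if_true, W, Matrix.mul_apply, Matrix.add_apply]
      · subst h
        simp [W, Matrix.mul_apply]
      · have l1 : ¬ r + 1 ≤ p := by omega
        have l2 : ¬ r ≤ p := by omega
        have l3 : ¬ r + 1 ≤ p + 1 := by omega
        simp only [l1, l2, l3, if_false, mul_zero, Finset.sum_const_zero, add_zero]

end mat
end BMV

theorem bmv_p_le_7 {n : ℕ} (A B : Matrix (Fin n) (Fin n) ℂ)
    (hA : A.PosSemidef) (hB : B.PosSemidef) (p : ℕ) (hp : p ≤ 7) (r : ℕ) :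
    0 ≤ (((A.map Polynomial.C
        + (Polynomial.X : Polynomial ℂ) • B.map Polynomial.C) ^ p).trace).coeff r := by
  rw [Matrix.trace, Polynomial.finsetSum_coeff]
  simp only [Matrix.diag_apply, BMV.coeff_pow]
  split_ifs with h
  · exact BMV.tr_W hA hB (p - r) r (by omega)
  · simp
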